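/- arXiv:2504.05949 — 2 statements merged into one kernel-verified Lean document; each statement's English description precedes it below -/
import Mathlib

section
/- Let 1 < p < ∞. There exist two positive constants C₁ and C₂, depending only on p, such that for all a, b, c, d ∈ ℝ with a, b > 0 and c, d ≥ 0, J_p(a−b) · (c^p/a^{p−1} − d^p/b^{p−1}) + C₁ · |(a−b)/(a+b)|^p · (c^p + d^p) ≤ C₂ · |c−d|^p. -/
/-! By the symmetry `(a, c) ↔ (b, d)` one may assume `b < a`. With `h = 1 - b / a ∈ (0, 1)`, the
first term is `h ^ (p - 1) * (c ^ p - d ^ p * (1 - h) ^ (-(p - 1)))` and `(a - b) / (a + b) ≤ h`.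
Since `(1 - h) ^ (-(p - 1)) ≥ 1 + (p - 1) * h`, the first term is at most
`h ^ (p - 1) * (c ^ p - d ^ p) - (p - 1) * h ^ p * d ^ p`, and everything reduces to
`reduced_inequality`, which splits into three cases.

* If `c ≤ d`, the negative term absorbs the `C₁` term.
* If `2 * d ≤ c`, then `c ≤ 2 * |c - d|` and every term is bounded by a multiple of `c ^ p`.
* If `d < c < 2 * d`, convexity gives `c ^ p - d ^ p ≤ p * c ^ (p - 1) * (c - d)`. With `X = h * c`
  and `Y = c - d` this contributes `p * X ^ (p - 1) * Y`, which a Young-type inequality splits into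
  a small multiple of `X ^ p`, absorbed by the negative term because `d ^ p ≥ 2 ^ (-p) * c ^ p`,
  and a large multiple of `Y ^ p`. -/

open MeasureTheory Real Filter Topology ENNReal

noncomputable section

/-- The Heisenberg group `ℍⁿ` as `ℝⁿ × ℝⁿ × ℝ`. -/
abbrev Heis (n : ℕ) : Type := (Fin n → ℝ) × (Fin n → ℝ) × ℝ

/-- Group law `ξ ∘ ξ' = (x+x', y+y', t+t'+2⟨y,x'⟩−2⟨x,y'⟩)`. -/
def Hmul {n : ℕ} (a b : Heis n) : Heis n :=
  (a.1 + b.1, a.2.1 + b.2.1,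
    a.2.2 + b.2.2 + 2 * (∑ i, a.2.1 i * b.1 i) - 2 * (∑ i, a.1 i * b.2.1 i))

/-- Group inverse `ξ⁻¹ = −ξ`. -/
def Hinv {n : ℕ} (a : Heis n) : Heis n := (-a.1, -a.2.1, -a.2.2)

/-- Squared Euclidean norm of the horizontal part `z = (x,y) ∈ ℝ^{2n}`. -/
def zsq {n : ℕ} (a : Heis n) : ℝ := (∑ i, (a.1 i) ^ 2) + (∑ i, (a.2.1 i) ^ 2)

/-- Euclidean norm `|z|` of the horizontal part. -/
def znorm {n : ℕ} (a : Heis n) : ℝ := Real.sqrt (zsq a)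

/-- The Koranyi–Folland gauge `d(ξ) = (|z|⁴ + t²)^{1/4}`. -/
def hd {n : ℕ} (a : Heis n) : ℝ := ((zsq a) ^ 2 + (a.2.2) ^ 2) ^ ((1 : ℝ) / 4)

/-- Homogeneous dimension `Q = 2n + 2` (as a real number). -/
def hQ (n : ℕ) : ℝ := 2 * n + 2

/-- First coordinate `x₁` of a point of `ℍⁿ`. -/
def x1 {n : ℕ} (a : Heis n) : ℝ := if h : 0 < n then a.1 ⟨0, h⟩ else 0

/-- The half-space `ℍⁿ₊ = {ξ : x₁ > 0}`. -/
def halfSpace (n : ℕ) : Set (Heis n) := {a | 0 < x1 a}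

/-- Euclidean distance `|z - z'|` of the horizontal parts. -/
def zdist {n : ℕ} (a b : Heis n) : ℝ := znorm (Hmul (Hinv a) b)

/-- `J_p(t) = |t|^{p-2} t`. -/
def Jp (p t : ℝ) : ℝ := |t| ^ (p - 2) * t

/-- The Gagliardo-type seminorm (to the `p`-th power)
`[f]_{s,p,α,Ω}^p = ∫_Ω ∫_Ω |f(ξ)-f(ξ')|^p / (d(ξ⁻¹∘ξ')^{Q+sp} |z-z'|^α)`. -/
def gagSem {n : ℕ} (p s α : ℝ) (Ω : Set (Heis n)) (f : Heis n → ℝ) : ℝ≥0∞ :=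
  ∫⁻ ξ in Ω, ∫⁻ ξ' in Ω, ENNReal.ofReal
    (|f ξ - f ξ'| ^ p / (hd (Hmul (Hinv ξ) ξ') ^ (hQ n + s * p) * zdist ξ ξ' ^ α))

/-- The seminorm for `α = 0` (no horizontal weight). -/
def gagSem0 {n : ℕ} (p s : ℝ) (Ω : Set (Heis n)) (f : Heis n → ℝ) : ℝ≥0∞ :=
  ∫⁻ ξ in Ω, ∫⁻ ξ' in Ω, ENNReal.ofReal
    (|f ξ - f ξ'| ^ p / hd (Hmul (Hinv ξ) ξ') ^ (hQ n + s * p))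

/-- The strip `𝒟_{r,R} = {ξ : r < x₁ < R}`. -/
def strip (n : ℕ) (r R : ℝ) : Set (Heis n) := {ξ | r < x1 ξ ∧ x1 ξ < R}

/-- `f ∈ W^{s,p,α}_{loc(x₁)}(ℍⁿ₊)`. -/
def MemWlocx1 (n : ℕ) (p s α : ℝ) (f : Heis n → ℝ) : Prop :=
  Measurable f ∧ ∀ r R : ℝ, 0 < r → r < R →
    (∫⁻ ξ in strip n r R, ENNReal.ofReal (|f ξ| ^ p)) < ⊤ ∧
    gagSem p s α (strip n r R) f < ⊤

/-- `f ∈ L^{p-1}_{sp,α}(ℍⁿ)`. -/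
def MemLsp (n : ℕ) (p s α : ℝ) (f : Heis n → ℝ) : Prop :=
  Measurable f ∧
  (∀ K : Set (Heis n), IsCompact K →
    (∫⁻ ξ in K, ENNReal.ofReal (|f ξ| ^ (p - 1))) < ⊤) ∧
  (∫⁻ ξ, ENNReal.ofReal (|f ξ| ^ (p - 1) /
      ((1 + hd ξ) ^ (hQ n + s * p) * (1 + znorm ξ) ^ α))) < ⊤

/-- `φ ∈ W^{s,p,α}(Ω)`. -/
def MemW (n : ℕ) (p s α : ℝ) (Ω : Set (Heis n)) (φ : Heis n → ℝ) : Prop :=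
  Measurable φ ∧ (∫⁻ ξ in Ω, ENNReal.ofReal (|φ ξ| ^ p)) < ⊤ ∧ gagSem p s α Ω φ < ⊤

/-- `φ ∈ W^{s,p}(Ω)` (the case `α = 0`). -/
def MemW0 (n : ℕ) (p s : ℝ) (Ω : Set (Heis n)) (φ : Heis n → ℝ) : Prop :=
  Measurable φ ∧ (∫⁻ ξ in Ω, ENNReal.ofReal (|φ ξ| ^ p)) < ⊤ ∧ gagSem0 p s Ω φ < ⊤

/-- `f ∈ W^{s,p}_{loc}(ℍⁿ₊)`. -/
def MemWloc0 (n : ℕ) (p s : ℝ) (f : Heis n → ℝ) : Prop :=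
  Measurable f ∧ ∀ K : Set (Heis n), IsCompact K → K ⊆ halfSpace n →
    (∫⁻ ξ in K, ENNReal.ofReal (|f ξ| ^ p)) < ⊤ ∧ gagSem0 p s K f < ⊤

/-- `f ∈ L^{p-1}_{sp}(ℍⁿ)`. -/
def MemLsp0 (n : ℕ) (p s : ℝ) (f : Heis n → ℝ) : Prop :=
  Measurable f ∧
  (∀ K : Set (Heis n), IsCompact K →
    (∫⁻ ξ in K, ENNReal.ofReal (|f ξ| ^ (p - 1))) < ⊤) ∧
  (∫⁻ ξ, ENNReal.ofReal (|f ξ| ^ (p - 1) / (1 + hd ξ) ^ (hQ n + s * p))) < ⊤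

/-- Surface measure of the unit sphere `S^{m-1} ⊂ ℝ^m`: `|S^{m-1}| = 2π^{m/2}/Γ(m/2)`. -/
def sphereArea (m : ℕ) : ℝ := 2 * Real.pi ^ ((m : ℝ) / 2) / Real.Gamma ((m : ℝ) / 2)

/-- `ℐ(k,θ,α) = (∫₀^∞ (1+t²)^{-(k+2+θ)/4} dt) (∫₀^∞ r^{k-2}(1+r²)^{-(k+θ+α)/2} dr)`. -/
def calI (k : ℕ) (θ α : ℝ) : ℝ :=
  (∫ t in Set.Ioi (0 : ℝ), (1 + t ^ 2) ^ (-(((k : ℝ) + 2 + θ) / 4))) *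
  (∫ r in Set.Ioi (0 : ℝ), r ^ ((k : ℝ) - 2) * (1 + r ^ 2) ^ (-(((k : ℝ) + θ + α) / 2)))

/-- `Λ_{s,p,α} = 2∫₀¹ |1-τ^{(sp+α-1)/p}|^p/(1-τ)^{1+sp+α} dτ + 2/(sp+α)`. -/
def LamC (s p α : ℝ) : ℝ :=
  2 * (∫ τ in Set.Ioo (0 : ℝ) 1,
      |1 - τ ^ ((s * p + α - 1) / p)| ^ p / (1 - τ) ^ (1 + s * p + α)) + 2 / (s * p + α)

/-- `u_β(τ) = τ^β` for `τ > 0`, extended by `0`. -/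
def ubeta (β τ : ℝ) : ℝ := if 0 < τ then τ ^ β else 0

/-- `λ(β,s,p)`. -/
def lam (p s β : ℝ) : ℝ :=
  2 * (∫ τ in Set.Ioo (0 : ℝ) 1,
      Jp p (1 - τ ^ β) * (1 - τ ^ (s * p - 1 - β * (p - 1))) / (1 - τ) ^ (1 + s * p)) +
  2 / (s * p)

/-- `λ_ε(β,s,p)`. -/
def lamEps (p s β ε : ℝ) : ℝ :=
  2 * (∫ τ in Set.Ioo (0 : ℝ) (1 / (1 + ε)), Jp p (1 - τ ^ β) / |1 - τ| ^ (1 + s * p)) +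
  2 * (∫ τ in Set.Ioi (1 + ε), Jp p (1 - τ ^ β) / |1 - τ| ^ (1 + s * p)) +
  2 / (s * p)

/-- The box `D_{R₀}`. -/
def boxD (n : ℕ) (R₀ : ℝ) : Set (Heis n) :=
  {ξ | (∀ i, |ξ.1 i| ≤ R₀) ∧ (∀ i, |ξ.2.1 i| ≤ R₀) ∧ |ξ.2.2| ≤ R₀ ^ 2}

/-- The box `D_{R₀,t}`. -/
def boxDt (n : ℕ) (R₀ : ℝ) : Set (Heis n) :=
  {ξ | (∀ i, |ξ.1 i| ≤ R₀) ∧ (∀ i, |ξ.2.1 i| ≤ R₀) ∧ |ξ.2.2| ≤ R₀ ^ 2 + R₀}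

/-- A Young-type inequality: `p * X ^ (p - 1) * Y` is bounded by the first term on the right when
`p * Y ≤ δ * X`, and by the second one otherwise. -/
lemma young_type {p δ X Y : ℝ} (hp : 1 < p) (hδ : 0 < δ) (hX : 0 ≤ X) (hY : 0 ≤ Y) :
    p * X ^ (p - 1) * Y ≤ δ * X ^ p + p * (p / δ) ^ (p - 1) * Y ^ p := by
  have hp0 : 0 < p := by linarith
  have split : ∀ Z : ℝ, 0 ≤ Z → Z ^ p = Z ^ (p - 1) * Z := fun Z hZ => by
    conv_rhs => rw [← Real.rpow_add_one' hZ (by linarith), sub_add_cancel]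
  have hXp : 0 ≤ X ^ (p - 1) := by positivity
  by_cases hc : p * Y ≤ δ * X
  · have h1 : 0 ≤ p * (p / δ) ^ (p - 1) * Y ^ p := by positivity
    have h2 := mul_le_mul_of_nonneg_left hc hXp
    rw [split X hX]
    linarith
  · have hXY : X ≤ p / δ * Y := by
      rw [div_mul_eq_mul_div, le_div_iff₀ hδ]
      linarith
    have h1 : X ^ (p - 1) ≤ (p / δ) ^ (p - 1) * Y ^ (p - 1) := by
      rw [← Real.mul_rpow (by positivity) hY]
      exact Real.rpow_le_rpow hX hXY (by linarith)
    have h2 := mul_le_mul_of_nonneg_left h1 (mul_nonneg hp0.le hY)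
    have h3 : 0 ≤ δ * X ^ p := by positivity
    rw [split Y hY]
    linarith

/-- Tangent-line bound at `c` for the convex function `t ↦ t ^ p`. -/
lemma rpow_sub_rpow_le {p c d : ℝ} (hp : 1 < p) (hc : 0 < c) (hd : 0 ≤ d) :
    c ^ p - d ^ p ≤ p * c ^ (p - 1) * (c - d) := by
  have hdc : 0 ≤ d / c := by positivity
  have h := one_add_mul_self_le_rpow_one_add (s := d / c - 1) (by linarith) hp.le
  rw [add_sub_cancel, Real.div_rpow hd hc.le, le_div_iff₀ (by positivity)] at h
  have hs : c ^ p = c ^ (p - 1) * c := by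
    rw [← Real.rpow_add_one hc.ne', sub_add_cancel]
  have e : (1 + p * (d / c - 1)) * c ^ p = c ^ p - p * c ^ (p - 1) * (c - d) := by
    rw [hs]
    field_simp
    ring
  linarith

lemma one_add_mul_le_rpow_neg {q x : ℝ} (hq : 0 ≤ q) (hx : 0 < x) :
    1 + q * (1 - x) ≤ x ^ (-q) := by
  rw [Real.rpow_def_of_pos hx]
  have h1 := Real.add_one_le_exp (Real.log x * -q)
  have h2 := mul_le_mul_of_nonneg_left (Real.log_le_sub_one_of_pos hx) hq
  linarith

/-- The inequality in the scale-invariant variable `h = 1 - b / a`, after the linear lower bound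
for `(1 - h) ^ (-(p - 1))` has been applied. -/
lemma reduced_inequality {p δ h c d : ℝ} (hp : 1 < p) (hδ : 0 < δ)
    (hδp : 2 * δ ≤ (p - 1) * (1 / 2) ^ p)
    (h0 : 0 < h) (h1 : h ≤ 1) (hc : 0 ≤ c) (hd : 0 ≤ d) :
    h ^ (p - 1) * (c ^ p - d ^ p) - (p - 1) * h ^ p * d ^ p + δ / 2 * h ^ p * (c ^ p + d ^ p) ≤
      (p * (p / δ) ^ (p - 1) + (1 + δ) * 2 ^ p) * |c - d| ^ p := by
  have hp0 : 0 < p := by linarith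
  have hh1 : h ^ (p - 1) ≤ 1 := Real.rpow_le_one h0.le h1 (by linarith)
  have hh2 : h ^ p ≤ 1 := Real.rpow_le_one h0.le h1 hp0.le
  have hhq : 0 < h ^ (p - 1) := by positivity
  have hhp : 0 < h ^ p := by positivity
  have hcp : 0 ≤ c ^ p := by positivity
  have hdp : 0 ≤ d ^ p := by positivity
  have hK : 0 ≤ p * (p / δ) ^ (p - 1) := by positivity
  have hL : 0 ≤ (1 + δ) * (2 : ℝ) ^ p := by positivity
  have hA : 0 ≤ |c - d| ^ p := by positivity
  have hδ1 : δ ≤ p - 1 := by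
    have : ((1 : ℝ) / 2) ^ p ≤ 1 := Real.rpow_le_one (by norm_num) (by norm_num) hp0.le
    have := mul_le_mul_of_nonneg_left this (sub_pos.2 hp).le
    linarith
  rcases le_or_gt c d with hcd | hcd
  · have e1 : c ^ p ≤ d ^ p := Real.rpow_le_rpow hc hcd hp0.le
    have e2 : h ^ (p - 1) * (c ^ p - d ^ p) ≤ 0 :=
      mul_nonpos_of_nonneg_of_nonpos hhq.le (by linarith)
    have e3 : δ / 2 * h ^ p * (c ^ p + d ^ p) ≤ δ / 2 * h ^ p * (2 * d ^ p) :=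
      mul_le_mul_of_nonneg_left (by linarith) (by positivity)
    have e4 : δ * (h ^ p * d ^ p) ≤ (p - 1) * (h ^ p * d ^ p) :=
      mul_le_mul_of_nonneg_right hδ1 (by positivity)
    have e5 := mul_nonneg (add_nonneg hK hL) hA
    linarith
  have hdc : d ^ p ≤ c ^ p := Real.rpow_le_rpow hd hcd.le hp0.le
  have e3 : δ / 2 * h ^ p * (c ^ p + d ^ p) ≤ δ / 2 * h ^ p * (2 * c ^ p) :=
    mul_le_mul_of_nonneg_left (by linarith) (by positivity)
  have hYp : 0 ≤ c - d := by linarith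
  rw [abs_of_nonneg hYp] at hA ⊢
  rcases le_or_gt (2 * d) c with hd2 | hd2
  · have e1 : c ^ p ≤ 2 ^ p * (c - d) ^ p := by
      rw [← Real.mul_rpow (by norm_num) hYp]
      exact Real.rpow_le_rpow hc (by linarith) hp0.le
    have e2 : h ^ (p - 1) * (c ^ p - d ^ p) ≤ 1 * c ^ p :=
      mul_le_mul hh1 (by linarith) (by linarith) zero_le_one
    have e4 : h ^ p * (δ * c ^ p) ≤ 1 * (δ * c ^ p) :=
      mul_le_mul_of_nonneg_right hh2 (by positivity)
    have e5 : 0 ≤ (p - 1) * h ^ p * d ^ p :=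
      mul_nonneg (mul_nonneg (by linarith) hhp.le) hdp
    have e6 := mul_nonneg hK hA
    have e7 := mul_le_mul_of_nonneg_left e1 (by linarith : 0 ≤ 1 + δ)
    linarith
  · have hc0 : 0 < c := by linarith
    have e1 := mul_le_mul_of_nonneg_left (rpow_sub_rpow_le hp hc0 hd) hhq.le
    have e2 := young_type hp hδ (mul_nonneg h0.le hc) hYp
    rw [Real.mul_rpow h0.le hc, Real.mul_rpow h0.le hc] at e2
    have e4 : (1 / 2) ^ p * c ^ p ≤ d ^ p := by
      rw [← Real.mul_rpow (by norm_num) hc]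
      exact Real.rpow_le_rpow (by positivity) (by linarith) hp0.le
    have e5 := mul_le_mul_of_nonneg_left e4 (mul_nonneg (sub_pos.2 hp).le hhp.le)
    have e6 := mul_le_mul_of_nonneg_right hδp (mul_nonneg hhp.le hcp)
    have e7 := mul_nonneg hL hA
    linarith

lemma Jp_neg (p t : ℝ) : Jp p (-t) = -Jp p t := by
  simp [Jp]

/-- The claim for `b < a`, with explicit constants. -/
lemma elementary_of_lt {p δ a b c d : ℝ} (hp : 1 < p) (hδ : 0 < δ)
    (hδp : 2 * δ ≤ (p - 1) * (1 / 2) ^ p)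
    (hb : 0 < b) (hab : b < a) (hc : 0 ≤ c) (hd : 0 ≤ d) :
    Jp p (a - b) * (c ^ p / a ^ (p - 1) - d ^ p / b ^ (p - 1)) +
        δ / 2 * |(a - b) / (a + b)| ^ p * (c ^ p + d ^ p) ≤
      (p * (p / δ) ^ (p - 1) + (1 + δ) * 2 ^ p) * |c - d| ^ p := by
  have ha : 0 < a := hb.trans hab
  have hs : 0 < a - b := sub_pos.2 hab
  have hp0 : 0 < p := by linarith
  have hx : 0 < b / a := by positivity
  have h0 : 0 < (a - b) / a := by positivity
  have h1 : (a - b) / a = 1 - b / a := by rw [sub_div, div_self ha.ne']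
  have hle : (a - b) / a ≤ 1 := by linarith
  refine le_trans ?_ (reduced_inequality hp hδ hδp h0 hle hc hd)
  have hhq : 0 < ((a - b) / a) ^ (p - 1) := by positivity
  have hdp : 0 ≤ d ^ p := by positivity
  have hJ : Jp p (a - b) = (a - b) ^ (p - 1) := by
    rw [Jp, abs_of_pos hs, ← Real.rpow_add_one hs.ne']
    congr 1
    ring
  have hF : Jp p (a - b) * (c ^ p / a ^ (p - 1) - d ^ p / b ^ (p - 1)) =
      ((a - b) / a) ^ (p - 1) * (c ^ p - d ^ p * (b / a) ^ (-(p - 1))) := by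
    have : a ^ (p - 1) ≠ 0 := (Real.rpow_pos_of_pos ha _).ne'
    have : b ^ (p - 1) ≠ 0 := (Real.rpow_pos_of_pos hb _).ne'
    rw [hJ, Real.rpow_neg hx.le, Real.div_rpow hs.le ha.le, Real.div_rpow hb.le ha.le]
    field_simp
  have hB := one_add_mul_le_rpow_neg (sub_pos.2 hp).le hx
  rw [← h1] at hB
  have e1 := mul_le_mul_of_nonneg_left hB (mul_nonneg hhq.le hdp)
  have hsplit : ((a - b) / a) ^ p = ((a - b) / a) ^ (p - 1) * ((a - b) / a) := by
    conv_rhs => rw [← Real.rpow_add_one h0.ne', sub_add_cancel]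
  have e2 : |(a - b) / (a + b)| ^ p ≤ ((a - b) / a) ^ p := by
    refine Real.rpow_le_rpow (abs_nonneg _) ?_ hp0.le
    rw [abs_of_pos (by positivity)]
    exact div_le_div_of_nonneg_left hs.le ha (by linarith)
  have e3 : δ / 2 * |(a - b) / (a + b)| ^ p * (c ^ p + d ^ p) ≤
      δ / 2 * ((a - b) / a) ^ p * (c ^ p + d ^ p) := by gcongr
  have e4 : (p - 1) * ((a - b) / a) ^ p * d ^ p =
      ((a - b) / a) ^ (p - 1) * d ^ p * ((p - 1) * ((a - b) / a)) := by
    rw [hsplit]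
    ring
  rw [hF, e4]
  linarith

/-- Lemma 4.1: elementary pointwise inequality. -/
theorem elementary_inequality (p : ℝ) (hp1 : 1 < p) :
    ∃ C₁ C₂ : ℝ, 0 < C₁ ∧ 0 < C₂ ∧
      ∀ a b c d : ℝ, 0 < a → 0 < b → 0 ≤ c → 0 ≤ d →
        Jp p (a - b) * (c ^ p / a ^ (p - 1) - d ^ p / b ^ (p - 1)) +
            C₁ * |(a - b) / (a + b)| ^ p * (c ^ p + d ^ p) ≤
          C₂ * |c - d| ^ p := by
  have hp0 : 0 < p := by linarith
  obtain ⟨δ, hδ, hδp⟩ : ∃ δ : ℝ, 0 < δ ∧ 2 * δ ≤ (p - 1) * (1 / 2) ^ p :=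
    ⟨(p - 1) * (1 / 2) ^ p / 2,
      div_pos (mul_pos (by linarith) (by positivity)) two_pos, by linarith⟩
  refine ⟨δ / 2, p * (p / δ) ^ (p - 1) + (1 + δ) * 2 ^ p, by positivity, by positivity, ?_⟩
  intro a b c d ha hb hc hd
  rcases lt_trichotomy a b with hab | rfl | hab
  · have h := elementary_of_lt hp1 hδ hδp ha hab hd hc
    rw [← neg_sub a b, Jp_neg, neg_div, abs_neg, add_comm b a, abs_sub_comm d c] at h
    linarith
  · simp only [sub_self, Jp, mul_zero, zero_mul, zero_div, abs_zero, Real.zero_rpow hp0.ne',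
      add_zero]
    positivity
  · exact elementary_of_lt hp1 hδ hδp hb hab hc hd
end
end

section
/- Let 1 < p < ∞, 0 < s < 1 and −1/(p−1) < β < sp/(p−1). For τ > 0 and 0 < ε < 1 set I_ε(τ) = (τ/(1+ε), (1+ε)τ), and let u_β(τ') = (τ')^β for τ' > 0 and u_β(τ') = 0 for τ' ≤ 0. Then for every τ > 0 and every 0 < ε < 1, 2∫_{ℝ ∖ I_ε(τ)} J_p(τ^β − u_β(τ')) / |τ−τ'|^{1+sp} dτ' = λ_ε(β,s,p) · τ^{β(p−1)−sp}, where λ_ε(β,s,p) = 2∫₀^{1/(1+ε)} J_p(1−t^β)/(1−t)^{1+sp} dt + 2∫_{1+ε}^∞ J_p(1−t^β)/(1−t)^{1+sp} dt + 2/(sp). -/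
/-! The integrand is homogeneous: writing `τ' = τ t`, it becomes `τ ^ (β (p - 1) - (1 + s p))`
times its value at `τ = 1` (`kernel_scaling`), and the Jacobian contributes one more factor `τ`, so
only `τ = 1` matters. There the complement of the truncation window is `(-∞, 0] ∪ (0, 1/(1+ε)] ∪
[1+ε, ∞)`. On the first piece `u_β = 0` and the integral is `∫₁^∞ x^{-1-sp} dx = 1/(sp)`; the other
two are the integrals in `λ_ε`. Since a Bochner integral may be split only for integrable functions,
the bound `|J_p(1 - t^β)| ≤ 1 + t^{β(p-1)}` is used with `β(p-1) > -1` near `0` and with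
`β(p-1) < sp` at infinity. -/

open MeasureTheory Real Filter Topology ENNReal

noncomputable section

/-- Pointwise size of `J_p`; the exponent `p - 2` may be negative, and `p > 1` covers `t = 0`. -/
lemma abs_Jp {p : ℝ} (hp : 1 < p) (t : ℝ) : |Jp p t| = |t| ^ (p - 1) := by
  unfold Jp
  rcases eq_or_ne t 0 with rfl | ht
  · simp [Real.zero_rpow (by linarith : p - 1 ≠ 0)]
  · have h : 0 < |t| := abs_pos.2 ht
    rw [abs_mul, abs_of_nonneg (Real.rpow_nonneg h.le _), ← Real.rpow_add_one h.ne']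
    ring_nf

/-- `J_p` is positively homogeneous of degree `p - 1`. -/
lemma Jp_mul {p c : ℝ} (hc : 0 < c) (t : ℝ) : Jp p (c * t) = c ^ (p - 1) * Jp p t := by
  unfold Jp
  rw [abs_mul, abs_of_pos hc, Real.mul_rpow hc.le (abs_nonneg t),
    show p - 1 = (p - 2) + 1 by ring, Real.rpow_add_one hc.ne']
  ring

lemma Jp_one (p : ℝ) : Jp p 1 = 1 := by simp [Jp]

lemma abs_Jp_one_sub_rpow_le {p β t : ℝ} (hp : 1 < p) (ht : 0 < t) :
    |Jp p (1 - t ^ β)| ≤ 1 + t ^ (β * (p - 1)) := by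
  rw [abs_Jp hp]
  have hx : 0 < t ^ β := Real.rpow_pos_of_pos ht β
  have hy : 0 < t ^ (β * (p - 1)) := Real.rpow_pos_of_pos ht _
  have hp' : 0 ≤ p - 1 := by linarith
  -- `|1 - x| ≤ max 1 x` for `x > 0`, so no power-mean constant is needed.
  rcases le_total (t ^ β) 1 with h | h
  · have : |1 - t ^ β| ^ (p - 1) ≤ 1 :=
      Real.rpow_le_one (abs_nonneg _) (abs_le.2 ⟨by linarith, by linarith⟩) hp'
    linarith
  · have : |1 - t ^ β| ^ (p - 1) ≤ (t ^ β) ^ (p - 1) :=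
      Real.rpow_le_rpow (abs_nonneg _) (abs_le.2 ⟨by linarith, by linarith⟩) hp'
    rw [← Real.rpow_mul ht.le] at this
    linarith

/-- The integrand at `τ = 1`, to which the general case reduces by scaling. -/
def unitKernel (p s β t : ℝ) : ℝ := Jp p (1 - ubeta β t) / |1 - t| ^ (1 + s * p)

lemma measurable_unitKernel (p s β : ℝ) : Measurable (unitKernel p s β) := by
  have hu : Measurable (ubeta β) :=
    Measurable.ite measurableSet_Ioi (measurable_id.pow_const β) measurable_const
  unfold unitKernel Jp
  exact ((((measurable_const.sub hu).abs).pow_const _).mul (measurable_const.sub hu)).div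
    (((measurable_const.sub measurable_id).abs).pow_const _)

lemma unitKernel_of_pos {p s β t : ℝ} (ht : 0 < t) :
    unitKernel p s β t = Jp p (1 - t ^ β) / |1 - t| ^ (1 + s * p) := by
  simp [unitKernel, ubeta, ht]

lemma unitKernel_of_nonpos {p s β t : ℝ} (ht : t ≤ 0) :
    unitKernel p s β t = (1 - t) ^ (-(1 + s * p)) := by
  rw [Real.rpow_neg (by linarith)]
  simp [unitKernel, ubeta, not_lt.2 ht, Jp_one, abs_of_pos (by linarith : 0 < 1 - t)]

/-- The half-line where `u_β` vanishes produces the term `1 / (sp)`. -/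
lemma unitKernel_Iic {p s β : ℝ} (hsp : 0 < s * p) :
    IntegrableOn (unitKernel p s β) (Set.Iic 0) ∧
      ∫ t in Set.Iic (0 : ℝ), unitKernel p s β t = 1 / (s * p) := by
  set f : ℝ → ℝ := (Set.Ici (1 : ℝ)).indicator fun x => x ^ (-(1 + s * p)) with hf
  have hcomp : (Set.Iic (0 : ℝ)).indicator (unitKernel p s β) = fun t => f (1 - t) := by
    funext t
    by_cases ht : t ≤ 0
    · have h1 : (1 : ℝ) ≤ 1 - t := by linarith
      simp [hf, Set.indicator, ht, unitKernel_of_nonpos ht]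
    · have h1 : ¬ (1 : ℝ) ≤ 1 - t := by linarith
      simp [hf, Set.indicator, ht]
  have hint : Integrable f := by
    rw [hf, integrable_indicator_iff measurableSet_Ici, integrableOn_Ici_iff_integrableOn_Ioi]
    exact integrableOn_Ioi_rpow_of_lt (by linarith) one_pos
  constructor
  · rw [← integrable_indicator_iff measurableSet_Iic, hcomp]
    exact hint.comp_sub_left 1
  · rw [← integral_indicator measurableSet_Iic, hcomp, integral_sub_left_eq_self f volume 1, hf,
      integral_indicator measurableSet_Ici, integral_Ici_eq_integral_Ioi,
      integral_Ioi_rpow_of_lt (by linarith) one_pos]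
    simp only [Real.one_rpow]
    rw [show -(1 + s * p) + 1 = -(s * p) by ring, neg_div_neg_eq]

/-- Near `0` the condition `β(p-1) > -1` gives integrability. -/
lemma unitKernel_Ioo {p s β a : ℝ} (hp : 1 < p) (hsp : 0 < s * p) (hβ : -1 < β * (p - 1))
    (ha0 : 0 < a) (ha1 : a < 1) : IntegrableOn (unitKernel p s β) (Set.Ioo 0 a) := by
  have hdom : IntegrableOn (fun t : ℝ => (1 + t ^ (β * (p - 1))) / (1 - a) ^ (1 + s * p))
      (Set.Ioo 0 a) := by
    refine Integrable.div_const (Integrable.add ?_ ?_) _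
    · exact integrableOn_const (by simp)
    · exact (intervalIntegral.integrableOn_Ioo_rpow_iff ha0).2 hβ
  refine Integrable.mono' hdom (measurable_unitKernel p s β).aestronglyMeasurable ?_
  filter_upwards [ae_restrict_mem measurableSet_Ioo] with t ht
  have h1 : 0 < 1 - a := by linarith
  rw [unitKernel_of_pos ht.1, Real.norm_eq_abs, abs_div,
    abs_of_nonneg (Real.rpow_nonneg (abs_nonneg (1 - t)) _)]
  gcongr
  · have := Real.rpow_pos_of_pos ht.1 (β * (p - 1)); linarith
  · exact abs_Jp_one_sub_rpow_le hp ht.1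
  · exact le_trans (by linarith [ht.2]) (le_abs_self (1 - t))

/-- Near infinity the condition `β(p-1) < sp` gives integrability. -/
lemma unitKernel_Ioi {p s β b : ℝ} (hp : 1 < p) (hsp : 0 < s * p) (hβ : β * (p - 1) < s * p)
    (hb : 1 < b) : IntegrableOn (unitKernel p s β) (Set.Ioi b) := by
  have hb0 : 0 < b := by linarith
  -- For `t > b`, `|1 - t| ≥ c t` with `c = 1 - 1 / b`.
  set c : ℝ := 1 - 1 / b with hc
  have hc0 : 0 < c := by
    have : 1 / b < 1 := by rw [div_lt_one hb0]; exact hb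
    linarith
  have hdom : IntegrableOn (fun t : ℝ =>
      (t ^ (-(1 + s * p)) + t ^ (β * (p - 1) - (1 + s * p))) / c ^ (1 + s * p)) (Set.Ioi b) := by
    refine Integrable.div_const (Integrable.add ?_ ?_) _
    · exact integrableOn_Ioi_rpow_of_lt (by linarith) hb0
    · exact integrableOn_Ioi_rpow_of_lt (by linarith) hb0
  refine Integrable.mono' hdom (measurable_unitKernel p s β).aestronglyMeasurable ?_
  filter_upwards [ae_restrict_mem measurableSet_Ioi] with t ht
  have ht' : b < t := ht
  have ht0 : 0 < t := by linarith
  have hct : c * t ≤ |1 - t| := by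
    have h2 : 1 ≤ t / b := by rw [le_div_iff₀ hb0]; linarith
    have h3 : c * t = t - t / b := by rw [hc]; ring
    rw [h3]
    exact le_trans (by linarith) (neg_le_abs (1 - t))
  have hdiv : (t ^ (-(1 + s * p)) + t ^ (β * (p - 1) - (1 + s * p))) / c ^ (1 + s * p)
      = (1 + t ^ (β * (p - 1))) / (c * t) ^ (1 + s * p) := by
    have h4 : t ^ (1 + s * p) ≠ 0 := (Real.rpow_pos_of_pos ht0 _).ne'
    have h5 : c ^ (1 + s * p) ≠ 0 := (Real.rpow_pos_of_pos hc0 _).ne'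
    rw [Real.mul_rpow hc0.le ht0.le, Real.rpow_neg ht0.le, Real.rpow_sub ht0]
    field_simp
  rw [hdiv, unitKernel_of_pos ht0, Real.norm_eq_abs, abs_div,
    abs_of_nonneg (Real.rpow_nonneg (abs_nonneg (1 - t)) _)]
  have hy := Real.rpow_pos_of_pos ht0 (β * (p - 1))
  gcongr
  exact abs_Jp_one_sub_rpow_le hp ht0

/-- Homogeneity of the integrand under the dilation `t ↦ τ t`. -/
lemma kernel_scaling {p s β τ : ℝ} (hτ : 0 < τ) (t : ℝ) :
    Jp p (τ ^ β - ubeta β (τ * t)) / |τ - τ * t| ^ (1 + s * p)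
      = τ ^ (β * (p - 1) - (1 + s * p)) * unitKernel p s β t := by
  have hu : ubeta β (τ * t) = τ ^ β * ubeta β t := by
    unfold ubeta
    by_cases ht : 0 < t
    · simp [ht, mul_pos hτ ht, Real.mul_rpow hτ.le ht.le]
    · have : ¬ 0 < τ * t := by rwa [mul_pos_iff_of_pos_left hτ]
      simp [ht, this]
  rw [hu, show τ ^ β - τ ^ β * ubeta β t = τ ^ β * (1 - ubeta β t) by ring,
    Jp_mul (Real.rpow_pos_of_pos hτ β), show τ - τ * t = τ * (1 - t) by ring, abs_mul,
    abs_of_pos hτ, Real.mul_rpow hτ.le (abs_nonneg _), ← Real.rpow_mul hτ.le, Real.rpow_sub hτ,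
    unitKernel, mul_div_mul_comm]

/-- The case `τ = 1`: the complement of the truncation window splits, up to null sets, into the
three pieces defining `λ_ε`. -/
lemma two_mul_integral_unitKernel {p s β ε : ℝ} (hp : 1 < p) (hsp : 0 < s * p)
    (hβl : -1 < β * (p - 1)) (hβu : β * (p - 1) < s * p) (hε : 0 < ε) :
    2 * ∫ t in (Set.Ioo (1 / (1 + ε)) (1 + ε))ᶜ, unitKernel p s β t = lamEps p s β ε := by
  have ha0 : 0 < 1 / (1 + ε) := by positivity
  have ha1 : 1 / (1 + ε) < 1 := by rw [div_lt_one (by linarith)]; linarith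
  set a := 1 / (1 + ε)
  have hset : (Set.Ioo a (1 + ε))ᶜ = (Set.Iic 0 ∪ Set.Ioc 0 a) ∪ Set.Ici (1 + ε) := by
    rw [Set.Iic_union_Ioc_eq_Iic ha0.le]
    ext t
    simp only [Set.mem_compl_iff, Set.mem_Ioo, Set.mem_union, Set.mem_Iic, Set.mem_Ici]
    rw [not_and_or, not_lt, not_lt]
  have h1 := unitKernel_Iic (p := p) (s := s) (β := β) hsp
  have h2 : IntegrableOn (unitKernel p s β) (Set.Ioc 0 a) :=
    (integrableOn_Ioc_iff_integrableOn_Ioo (by simp)).2 (unitKernel_Ioo hp hsp hβl ha0 ha1)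
  have h3 : IntegrableOn (unitKernel p s β) (Set.Ici (1 + ε)) :=
    (integrableOn_Ici_iff_integrableOn_Ioi (by simp)).2 (unitKernel_Ioi hp hsp hβu (by linarith))
  rw [hset, setIntegral_union _ measurableSet_Ici (h1.1.union h2) h3,
    setIntegral_union _ measurableSet_Ioc h1.1 h2, h1.2, integral_Ioc_eq_integral_Ioo,
    integral_Ici_eq_integral_Ioi,
    setIntegral_congr_fun measurableSet_Ioo fun t ht => unitKernel_of_pos ht.1,
    setIntegral_congr_fun measurableSet_Ioi fun t (ht : 1 + ε < t) =>
      unitKernel_of_pos (by linarith : 0 < t), lamEps]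
  · ring
  · rw [Set.disjoint_left]
    rintro t ht ⟨h, -⟩
    exact absurd h (not_lt.2 ht)
  · rw [Set.Iic_union_Ioc_eq_Iic ha0.le, Set.disjoint_left]
    intro t ht h
    have h4 : t ≤ a := ht
    have h5 : 1 + ε ≤ t := h
    linarith

/-- Proposition 5.1(i), identity for the truncated integral:
`2∫_{ℝ∖I_ε(τ)} J_p(τ^β − u_β(τ'))/|τ−τ'|^{1+sp} dτ' = λ_ε(β,s,p) τ^{β(p−1)−sp}`. -/
theorem truncated_integral_identity (p s β : ℝ) (hp1 : 1 < p) (hs0 : 0 < s) (hs1 : s < 1)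
    (hβl : -(1 / (p - 1)) < β) (hβu : β < s * p / (p - 1))
    (τ : ℝ) (hτ : 0 < τ) (ε : ℝ) (hε0 : 0 < ε) (hε1 : ε < 1) :
    2 * (∫ τ' in (Set.Ioo (τ / (1 + ε)) ((1 + ε) * τ))ᶜ,
        Jp p (τ ^ β - ubeta β τ') / |τ - τ'| ^ (1 + s * p)) =
      lamEps p s β ε * τ ^ (β * (p - 1) - s * p) := by
  have hp' : 0 < p - 1 := by linarith
  have hβl' : -1 < β * (p - 1) := by
    have := mul_lt_mul_of_pos_right hβl hp'
    rwa [neg_mul, one_div, inv_mul_cancel₀ hp'.ne'] at this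
  have hβu' : β * (p - 1) < s * p := (lt_div_iff₀ hp').1 hβu
  have hsp : 0 < s * p := mul_pos hs0 (by linarith)
  set S : Set ℝ := (Set.Ioo (τ / (1 + ε)) ((1 + ε) * τ))ᶜ with hS
  set T : Set ℝ := (Set.Ioo (1 / (1 + ε)) (1 + ε))ᶜ with hT
  have hSm : MeasurableSet S := measurableSet_Ioo.compl
  have hTm : MeasurableSet T := measurableSet_Ioo.compl
  set F : ℝ → ℝ := fun τ' => Jp p (τ ^ β - ubeta β τ') / |τ - τ'| ^ (1 + s * p) with hF
  have hmem (t : ℝ) : τ * t ∈ S ↔ t ∈ T := by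
    have e1 : τ / (1 + ε) < τ * t ↔ 1 / (1 + ε) < t := by
      rw [show τ / (1 + ε) = τ * (1 / (1 + ε)) by ring, mul_lt_mul_iff_right₀ hτ]
    have e2 : τ * t < (1 + ε) * τ ↔ t < 1 + ε := by
      rw [mul_comm (1 + ε) τ, mul_lt_mul_iff_right₀ hτ]
    simp only [hS, hT, Set.mem_compl_iff, Set.mem_Ioo, e1, e2]
  have hcomp : (fun t => S.indicator F (τ * t)) =
      T.indicator fun t => τ ^ (β * (p - 1) - (1 + s * p)) * unitKernel p s β t := by
    funext t
    by_cases ht : t ∈ T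
    · rw [Set.indicator_of_mem ht, Set.indicator_of_mem ((hmem t).2 ht)]
      exact kernel_scaling hτ t
    · rw [Set.indicator_of_notMem ht, Set.indicator_of_notMem (mt (hmem t).1 ht)]
  have hscale := Measure.integral_comp_mul_left (S.indicator F) τ
  rw [hcomp, integral_indicator hTm, integral_indicator hSm, integral_const_mul,
    abs_of_pos (inv_pos.2 hτ), smul_eq_mul] at hscale
  have hpow : τ ^ (β * (p - 1) - s * p) = τ * τ ^ (β * (p - 1) - (1 + s * p)) := by
    rw [show β * (p - 1) - s * p = β * (p - 1) - (1 + s * p) + 1 by ring,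
      Real.rpow_add_one hτ.ne', mul_comm]
  have hmain : ∫ x in S, F x =
      τ * (τ ^ (β * (p - 1) - (1 + s * p)) * ∫ t in T, unitKernel p s β t) := by
    rw [hscale, mul_inv_cancel_left₀ hτ.ne']
  rw [hmain, hpow, ← two_mul_integral_unitKernel hp1 hsp hβl' hβu' hε0]
  ring
end
end
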